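/- Decoupling theorem: let ρ^{ABE} be a tripartite state with dim A = d, and suppose S(ρ^A) ≤ log₂ d, S(Z^A|B)_ρ ≤ ε₁, and S(X^A|B)_ρ ≤ ε₂, where X, Z are conjugate generalized Pauli observables on A. Then Tr|ρ^{AE} − ρ^A ⊗ ρ^E| ≤ 2√(ε₁ + ε₂). -/

import Mathlib

open Matrix Kronecker ComplexOrder

noncomputable section

/-- ω = e^{2πi/d} -/
noncomputable def qomega (d : ℕ) : ℂ := Complex.exp (2 * Real.pi * Complex.I / d)

/-- Generalized Pauli Z: Z|k⟩ = ω^k |k⟩. -/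
noncomputable def pauliZ (d : ℕ) : Matrix (Fin d) (Fin d) ℂ :=
  Matrix.diagonal fun k : Fin d => qomega d ^ (k : ℕ)

/-- Generalized Pauli X: X|k⟩ = |k+1 mod d⟩. -/
noncomputable def pauliX (d : ℕ) [NeZero d] : Matrix (Fin d) (Fin d) ℂ :=
  Matrix.of fun i j : Fin d => if i = j + 1 then 1 else 0

/-- Fourier matrix: column j is |x̃_j⟩ = (1/√d) Σ_k ω^{jk} |k⟩. -/
noncomputable def fourierMat (d : ℕ) : Matrix (Fin d) (Fin d) ℂ :=
  Matrix.of fun k j : Fin d => qomega d ^ ((j : ℕ) * (k : ℕ)) / (Real.sqrt d : ℂ)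

/-- density operator predicate -/
def IsDensity {n : Type*} [Fintype n] (ρ : Matrix n n ℂ) : Prop :=
  ρ.PosSemidef ∧ ρ.trace = 1

/-- von Neumann entropy in base 2, via eigenvalues. -/
noncomputable def vN {n : Type*} [Fintype n] [DecidableEq n] (ρ : Matrix n n ℂ) : ℝ :=
  if h : ρ.IsHermitian then ∑ i, -(h.eigenvalues i * Real.logb 2 (h.eigenvalues i)) else 0

/-- complete dephasing in the standard basis -/
def dephase {n : Type*} [DecidableEq n] (M : Matrix n n ℂ) : Matrix n n ℂ :=
  Matrix.of fun i j => if i = j then M i j else 0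

/-- dephasing of the first (A) factor of a bipartite state, standard (Z eigen-) basis -/
def dephaseA {a b : Type*} [DecidableEq a] (M : Matrix (a × b) (a × b) ℂ) :
    Matrix (a × b) (a × b) ℂ :=
  Matrix.of fun p q => if p.1 = q.1 then M p q else 0

/-- dephasing of the first (A) factor in the Fourier (X eigen-) basis -/
noncomputable def dephaseXA (d : ℕ) {b : Type*} [Fintype b] [DecidableEq b]
    (M : Matrix (Fin d × b) (Fin d × b) ℂ) : Matrix (Fin d × b) (Fin d × b) ℂ :=
  (fourierMat d ⊗ₖ (1 : Matrix b b ℂ)) *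
    dephaseA ((fourierMat d ⊗ₖ (1 : Matrix b b ℂ))ᴴ * M * (fourierMat d ⊗ₖ (1 : Matrix b b ℂ))) *
    (fourierMat d ⊗ₖ (1 : Matrix b b ℂ))ᴴ

/-- reduced state on A of a bipartite state -/
def r2A {a b : Type*} [Fintype b] (M : Matrix (a × b) (a × b) ℂ) : Matrix a a ℂ :=
  Matrix.of fun i j => ∑ y : b, M (i, y) (j, y)

/-- reduced state on B of a bipartite state -/
def r2B {a b : Type*} [Fintype a] (M : Matrix (a × b) (a × b) ℂ) : Matrix b b ℂ :=
  Matrix.of fun i j => ∑ x : a, M (x, i) (x, j)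

/-- reduced state on AB of a tripartite state on A ⊗ B ⊗ E -/
def rAB {a b e : Type*} [Fintype e] (M : Matrix (a × b × e) (a × b × e) ℂ) :
    Matrix (a × b) (a × b) ℂ :=
  Matrix.of fun p q => ∑ x : e, M (p.1, p.2, x) (q.1, q.2, x)

/-- reduced state on AE of a tripartite state -/
def rAE {a b e : Type*} [Fintype b] (M : Matrix (a × b × e) (a × b × e) ℂ) :
    Matrix (a × e) (a × e) ℂ :=
  Matrix.of fun p q => ∑ y : b, M (p.1, y, p.2) (q.1, y, q.2)

/-- reduced state on A of a tripartite state -/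
def rA {a b e : Type*} [Fintype b] [Fintype e] (M : Matrix (a × b × e) (a × b × e) ℂ) :
    Matrix a a ℂ :=
  Matrix.of fun i j => ∑ y : b, ∑ x : e, M (i, y, x) (j, y, x)

/-- reduced state on B of a tripartite state -/
def rB {a b e : Type*} [Fintype a] [Fintype e] (M : Matrix (a × b × e) (a × b × e) ℂ) :
    Matrix b b ℂ :=
  Matrix.of fun i j => ∑ x : a, ∑ z : e, M (x, i, z) (x, j, z)

/-- reduced state on E of a tripartite state -/
def rE {a b e : Type*} [Fintype a] [Fintype b] (M : Matrix (a × b × e) (a × b × e) ℂ) :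
    Matrix e e ℂ :=
  Matrix.of fun i j => ∑ x : a, ∑ y : b, M (x, y, i) (x, y, j)

/-- matrix logarithm (base 2) of a Hermitian matrix via spectral decomposition -/
noncomputable def mlog {n : Type*} [Fintype n] [DecidableEq n] (M : Matrix n n ℂ) :
    Matrix n n ℂ :=
  if h : M.IsHermitian then
    (h.eigenvectorUnitary : Matrix n n ℂ) *
      Matrix.diagonal (fun i => (Real.logb 2 (h.eigenvalues i) : ℂ)) *
      (h.eigenvectorUnitary : Matrix n n ℂ)ᴴ
  else 0

/-- quantum relative entropy S(ρ‖σ) = Tr[ρ(log₂ρ − log₂σ)] -/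
noncomputable def relEnt {n : Type*} [Fintype n] [DecidableEq n] (ρ σ : Matrix n n ℂ) : ℝ :=
  ((ρ * (mlog ρ - mlog σ)).trace).re

/-- trace norm of a Hermitian matrix -/
noncomputable def traceNorm {n : Type*} [Fintype n] [DecidableEq n] (M : Matrix n n ℂ) : ℝ :=
  if h : M.IsHermitian then ∑ i, |h.eigenvalues i| else 0



/-! ### scalar lemma -/

lemma aux_log_int {K K' : Type*} [Fintype K] [Fintype K'] (p r : K → ℝ) (p' r' : K' → ℝ)
    (hr : ∀ k, 0 < r k) (hr' : ∀ k, 0 < r' k) (hs : ∑ k, p k = ∑ k, p' k)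
    (h : ∀ s : ℝ, 0 < s → ∑ k, p' k / (s + r' k) ≤ ∑ k, p k / (s + r k)) :
    ∑ k, p k * Real.log (r k) ≤ ∑ k, p' k * Real.log (r' k) := by
  set G : ℝ → ℝ := fun s => ∑ k, p k * Real.log (s + r k) - ∑ k, p' k * Real.log (s + r' k) with hG
  have hd : ∀ s : ℝ, 0 ≤ s →
      HasDerivAt G (∑ k, p k / (s + r k) - ∑ k, p' k / (s + r' k)) s := by
    intro s hs0
    apply HasDerivAt.sub
    · apply HasDerivAt.fun_sum
      intro k _
      have h1 : HasDerivAt (fun s : ℝ => s + r k) 1 s := (hasDerivAt_id s).add_const _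
      have h2 := (h1.log (by have := hr k; positivity)).const_mul (p k)
      exact h2.congr_deriv (by rw [mul_one_div])
    · apply HasDerivAt.fun_sum
      intro k _
      have h1 : HasDerivAt (fun s : ℝ => s + r' k) 1 s := (hasDerivAt_id s).add_const _
      have h2 := (h1.log (by have := hr' k; positivity)).const_mul (p' k)
      exact h2.congr_deriv (by rw [mul_one_div])
  have hmono : MonotoneOn G (Set.Ici 0) := by
    apply monotoneOn_of_deriv_nonneg (convex_Ici 0)
    · intro s hs0
      exact (hd s hs0).continuousAt.continuousWithinAt
    · intro s hs0
      rw [interior_Ici] at hs0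
      exact (hd s (le_of_lt hs0)).differentiableAt.differentiableWithinAt
    · intro s hs0
      rw [interior_Ici] at hs0
      rw [(hd s (le_of_lt hs0)).deriv]
      have := h s hs0
      linarith
  have key : ∀ c : ℝ, 0 < c →
      Filter.Tendsto (fun s : ℝ => Real.log (s + c) - Real.log s) Filter.atTop (nhds 0) := by
    intro c hc
    have h1 : Filter.Tendsto (fun s : ℝ => Real.log (1 + c / s)) Filter.atTop (nhds (Real.log (1 + 0))) := by
      apply Filter.Tendsto.log
      · exact tendsto_const_nhds.add (tendsto_const_nhds.div_atTop Filter.tendsto_id)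
      · norm_num
    simp only [add_zero, Real.log_one] at h1
    refine h1.congr' ?_
    filter_upwards [Filter.eventually_gt_atTop 0] with s hs0
    rw [← Real.log_div (by positivity) (by positivity)]
    congr 1
    field_simp
  have hlim : Filter.Tendsto G Filter.atTop (nhds 0) := by
    have h1 : Filter.Tendsto (fun s => ∑ k, p k * (Real.log (s + r k) - Real.log s)
        - ∑ k, p' k * (Real.log (s + r' k) - Real.log s)) Filter.atTop
        (nhds (∑ k, p k * 0 - ∑ k, p' k * 0)) := by
      apply Filter.Tendsto.sub
      · exact tendsto_finsetSum _ fun k _ => (key _ (hr k)).const_mul _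
      · exact tendsto_finsetSum _ fun k _ => (key _ (hr' k)).const_mul _
    simp only [mul_zero, Finset.sum_const_zero, sub_zero] at h1
    refine h1.congr ?_
    intro s
    simp only [hG, mul_sub, Finset.sum_sub_distrib, ← Finset.sum_mul, hs]
    ring
  have h0 : G 0 ≤ 0 := by
    refine ge_of_tendsto hlim ?_
    filter_upwards [Filter.eventually_ge_atTop 0] with s hs0
    exact hmono (Set.mem_Ici.2 le_rfl) hs0 hs0
  simp only [hG, zero_add] at h0
  linarith

/-! ### diagonalisations -/

structure Dg {n k : Type*} [Fintype n] [DecidableEq n] [Fintype k] [DecidableEq k]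
    (ρ : Matrix n n ℂ) (U : Matrix n k ℂ) (l : k → ℝ) : Prop where
  h1 : Uᴴ * U = 1
  h2 : U * Uᴴ = 1
  eq : ρ = U * Matrix.diagonal (fun i => (l i : ℂ)) * Uᴴ
  nn : ∀ i, 0 ≤ l i

lemma Dg.exists {n : Type*} [Fintype n] [DecidableEq n] {ρ : Matrix n n ℂ}
    (h : ρ.PosSemidef) : ∃ (U : Matrix n n ℂ) (l : n → ℝ), Dg ρ U l := by
  refine ⟨h.isHermitian.eigenvectorUnitary, h.isHermitian.eigenvalues, ?_, ?_, ?_,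
    h.eigenvalues_nonneg⟩
  · exact Unitary.coe_star_mul_self _
  · exact Unitary.coe_mul_star_self _
  · have := h.isHermitian.spectral_theorem
    rw [Unitary.conjStarAlgAut_apply] at this
    exact this

lemma vN_roots {n : Type*} [Fintype n] [DecidableEq n] {ρ : Matrix n n ℂ} (h : ρ.IsHermitian) :
    vN ρ = (ρ.charpoly.roots.map (fun z => -(z.re * Real.logb 2 z.re))).sum := by
  rw [vN, dif_pos h, h.roots_charpoly_eq_eigenvalues]
  simp

lemma vN_mul_comm {n k : Type*} [Fintype n] [DecidableEq n] [Fintype k] [DecidableEq k]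
    (A : Matrix n k ℂ) (B : Matrix k n ℂ) (hAB : (A * B).IsHermitian) (hBA : (B * A).IsHermitian) :
    vN (A * B) = vN (B * A) := by
  rw [vN_roots hAB, vN_roots hBA]
  have h := congrArg Polynomial.roots (Matrix.charpoly_mul_comm' A B)
  rw [Polynomial.roots_mul (mul_ne_zero (pow_ne_zero _ Polynomial.X_ne_zero) (charpoly_monic _).ne_zero),
    Polynomial.roots_mul (mul_ne_zero (pow_ne_zero _ Polynomial.X_ne_zero) (charpoly_monic _).ne_zero)] at h
  have h2 := congrArg (fun m : Multiset ℂ => (m.map (fun z => -(z.re * Real.logb 2 z.re))).sum) h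
  simpa [Multiset.map_nsmul, Multiset.sum_nsmul] using h2

lemma Dg.vN_eq {n k : Type*} [Fintype n] [DecidableEq n] [Fintype k] [DecidableEq k]
    {ρ : Matrix n n ℂ} {U : Matrix n k ℂ} {l : k → ℝ} (h : Dg ρ U l) :
    vN ρ = -∑ i, l i * Real.logb 2 (l i) := by
  have hd : (Matrix.diagonal (fun i => (l i : ℂ))).IsHermitian := by
    rw [Matrix.isHermitian_diagonal_iff]
    intro i
    simp [IsSelfAdjoint]
  have h3 : Uᴴ * (U * Matrix.diagonal (fun i => (l i : ℂ))) = Matrix.diagonal (fun i => (l i : ℂ)) := by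
    rw [← Matrix.mul_assoc, h.h1, Matrix.one_mul]
  rw [h.eq, vN_mul_comm, h3, vN_roots hd, Matrix.charpoly_diagonal, Polynomial.roots_prod]
  · simp
  · simp [Finset.prod_ne_zero_iff, Polynomial.X_sub_C_ne_zero]
  · simpa using Matrix.isHermitian_mul_mul_conjTranspose U hd
  · rw [h3]; exact hd

lemma vN_transpose {n : Type*} [Fintype n] [DecidableEq n] {ρ : Matrix n n ℂ} (h : ρ.IsHermitian) :
    vN ρᵀ = vN ρ := by
  rw [vN_roots h, vN_roots h.transpose, Matrix.charpoly_transpose]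

/-! ### the variational functional -/

def QQ {n : Type*} [Fintype n] (s : ℝ) (ρ σ W : Matrix n n ℂ) : ℝ :=
  2 * (trace (Wᴴ * ρ)).re - s * (trace (W * ρ * Wᴴ)).re - (trace (Wᴴ * σ * W)).re

lemma QQ_coord {n k m : Type*} [Fintype n] [DecidableEq n] [Fintype k] [DecidableEq k]
    [Fintype m] [DecidableEq m]
    {ρ σ : Matrix n n ℂ} {U : Matrix n k ℂ} {l : k → ℝ} {V : Matrix n m ℂ} {μ : m → ℝ}
    (hρ : Dg ρ U l) (hσ : Dg σ V μ) (s : ℝ) (X : Matrix m k ℂ) :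
    QQ s ρ σ (V * X * Uᴴ) = ∑ j, ∑ i, (2 * ((star (X j i) * (Vᴴ * U) j i).re * l i)
      - Complex.normSq (X j i) * (s * l i + μ j)) := by
  have t1 : trace ((V * X * Uᴴ)ᴴ * ρ) =
      trace (Xᴴ * (Vᴴ * U) * Matrix.diagonal (fun i => (l i : ℂ))) := by
    rw [hρ.eq]
    calc _ = trace (U * (Xᴴ * Vᴴ * U * Matrix.diagonal (fun i => (l i : ℂ)) * Uᴴ)) := by
          simp [Matrix.mul_assoc]
      _ = trace (Xᴴ * (Vᴴ * U) * Matrix.diagonal (fun i => (l i : ℂ)) * (Uᴴ * U)) := by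
          rw [Matrix.trace_mul_comm]; simp [Matrix.mul_assoc]
      _ = _ := by rw [hρ.h1, Matrix.mul_one]
  have t2 : trace (V * X * Uᴴ * ρ * (V * X * Uᴴ)ᴴ) =
      trace (X * Matrix.diagonal (fun i => (l i : ℂ)) * Xᴴ) := by
    rw [hρ.eq]
    calc _ = trace (V * (X * (Uᴴ * U) * Matrix.diagonal (fun i => (l i : ℂ)) * (Uᴴ * U) * Xᴴ * Vᴴ)) := by
          simp [Matrix.mul_assoc]
      _ = trace (X * (Uᴴ * U) * Matrix.diagonal (fun i => (l i : ℂ)) * (Uᴴ * U) * Xᴴ * (Vᴴ * V)) := by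
          rw [Matrix.trace_mul_comm]; simp [Matrix.mul_assoc]
      _ = _ := by rw [hρ.h1, hσ.h1, Matrix.mul_one, Matrix.mul_one, Matrix.mul_one]
  have t3 : trace ((V * X * Uᴴ)ᴴ * σ * (V * X * Uᴴ)) =
      trace (Xᴴ * Matrix.diagonal (fun i => (μ i : ℂ)) * X) := by
    rw [hσ.eq]
    calc _ = trace (U * (Xᴴ * (Vᴴ * V) * Matrix.diagonal (fun i => (μ i : ℂ)) * (Vᴴ * V) * X * Uᴴ)) := by
          simp [Matrix.mul_assoc]
      _ = trace (Xᴴ * (Vᴴ * V) * Matrix.diagonal (fun i => (μ i : ℂ)) * (Vᴴ * V) * X * (Uᴴ * U)) := by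
          rw [Matrix.trace_mul_comm]; simp [Matrix.mul_assoc]
      _ = _ := by rw [hρ.h1, hσ.h1, Matrix.mul_one, Matrix.mul_one, Matrix.mul_one]
  rw [QQ, t1, t2, t3]
  have e1 : (trace (Xᴴ * (Vᴴ * U) * Matrix.diagonal (fun i => (l i : ℂ)))).re
      = ∑ j, ∑ i, (star (X j i) * (Vᴴ * U) j i).re * l i := by
    rw [Finset.sum_comm]
    simp only [Matrix.trace, Matrix.diag_apply, Matrix.mul_diagonal, Complex.re_sum]
    refine Finset.sum_congr rfl fun i _ => ?_
    rw [Complex.re_mul_ofReal, Matrix.mul_apply, Complex.re_sum, Finset.sum_mul]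
    simp [Matrix.conjTranspose_apply]
  have e2 : (trace (X * Matrix.diagonal (fun i => (l i : ℂ)) * Xᴴ)).re
      = ∑ j, ∑ i, Complex.normSq (X j i) * l i := by
    simp only [Matrix.trace, Matrix.diag_apply, Complex.re_sum]
    refine Finset.sum_congr rfl fun j _ => ?_
    rw [Matrix.mul_apply, Complex.re_sum]
    refine Finset.sum_congr rfl fun i _ => ?_
    rw [Matrix.mul_diagonal, Matrix.conjTranspose_apply, mul_right_comm, Complex.re_mul_ofReal]
    simp [Complex.mul_conj]
  have e3 : (trace (Xᴴ * Matrix.diagonal (fun i => (μ i : ℂ)) * X)).re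
      = ∑ j, ∑ i, Complex.normSq (X j i) * μ j := by
    rw [Finset.sum_comm]
    simp only [Matrix.trace, Matrix.diag_apply, Complex.re_sum]
    refine Finset.sum_congr rfl fun j _ => ?_
    rw [Matrix.mul_apply, Complex.re_sum]
    refine Finset.sum_congr rfl fun i _ => ?_
    rw [Matrix.mul_diagonal, Matrix.conjTranspose_apply, mul_right_comm, Complex.re_mul_ofReal,
      mul_comm (star (X i j))]
    simp [Complex.mul_conj]
  rw [e1, e2, e3]
  simp only [Finset.mul_sum, ← Finset.sum_sub_distrib]
  refine Finset.sum_congr rfl fun j _ => Finset.sum_congr rfl fun i _ => ?_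
  ring

def FF {k m : Type*} [Fintype k] [Fintype m] (s : ℝ) (c : Matrix m k ℂ) (l : k → ℝ) (μ : m → ℝ) : ℝ :=
  ∑ j, ∑ i, Complex.normSq (c j i) * l i ^ 2 / (s * l i + μ j)

lemma aux_quad (x c : ℂ) (l t : ℝ) (ht : 0 ≤ t) (h : t = 0 → l = 0) :
    2 * ((star x * c).re * l) - Complex.normSq x * t ≤ Complex.normSq c * l ^ 2 / t := by
  rcases ht.eq_or_lt with h0 | h0
  · simp [h h0.symm, ← h0]
  · rw [le_div_iff₀ h0]
    have : 0 ≤ Complex.normSq (c * l - t * x) := Complex.normSq_nonneg _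
    simp [Complex.normSq_apply] at this ⊢
    nlinarith [this]

lemma QQ_le {n k m : Type*} [Fintype n] [DecidableEq n] [Fintype k] [DecidableEq k]
    [Fintype m] [DecidableEq m]
    {ρ σ : Matrix n n ℂ} {U : Matrix n k ℂ} {l : k → ℝ} {V : Matrix n m ℂ} {μ : m → ℝ}
    (hρ : Dg ρ U l) (hσ : Dg σ V μ) {s : ℝ} (hs : 0 < s) (W : Matrix n n ℂ) :
    QQ s ρ σ W ≤ FF s (Vᴴ * U) l μ := by
  have hW : W = V * (Vᴴ * W * U) * Uᴴ := by
    calc W = (V * Vᴴ) * W * (U * Uᴴ) := by rw [hρ.h2, hσ.h2]; simp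
      _ = _ := by simp [Matrix.mul_assoc]
  rw [hW, QQ_coord hρ hσ, FF]
  refine Finset.sum_le_sum fun j _ => Finset.sum_le_sum fun i _ => ?_
  have a := hρ.nn i
  have b := hσ.nn j
  apply aux_quad
  · positivity
  · intro h
    have : s * l i = 0 := by nlinarith [mul_nonneg hs.le a]
    rcases mul_eq_zero.1 this with h | h
    · exact absurd h hs.ne'
    · exact h

lemma QQ_att {n k m : Type*} [Fintype n] [DecidableEq n] [Fintype k] [DecidableEq k]
    [Fintype m] [DecidableEq m]
    {ρ σ : Matrix n n ℂ} {U : Matrix n k ℂ} {l : k → ℝ} {V : Matrix n m ℂ} {μ : m → ℝ}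
    (hρ : Dg ρ U l) (hσ : Dg σ V μ) (s : ℝ) :
    ∃ W, QQ s ρ σ W = FF s (Vᴴ * U) l μ := by
  refine ⟨V * (Matrix.of fun j i => (Vᴴ * U) j i * ((l i / (s * l i + μ j) : ℝ) : ℂ)) * Uᴴ, ?_⟩
  rw [QQ_coord hρ hσ, FF]
  refine Finset.sum_congr rfl fun j _ => Finset.sum_congr rfl fun i _ => ?_
  rw [Matrix.of_apply]
  generalize (Vᴴ * U) j i = c
  generalize s * l i + μ j = t
  have : (star (c * ((l i / t : ℝ) : ℂ)) * c).re = Complex.normSq c * (l i / t) := by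
    simp [Complex.normSq_apply, -Complex.ofReal_div]
    ring
  rw [this, Complex.normSq_mul, Complex.normSq_ofReal]
  by_cases h : t = 0
  · simp [h]
  · field_simp
    ring

lemma FF_mono {n k m n' k' m' : Type*} [Fintype n] [DecidableEq n] [Fintype k] [DecidableEq k]
    [Fintype m] [DecidableEq m] [Fintype n'] [DecidableEq n'] [Fintype k'] [DecidableEq k']
    [Fintype m'] [DecidableEq m']
    {ρ σ : Matrix n n ℂ} {U : Matrix n k ℂ} {l : k → ℝ} {V : Matrix n m ℂ} {μ : m → ℝ}
    {ρ' σ' : Matrix n' n' ℂ} {U' : Matrix n' k' ℂ} {l' : k' → ℝ} {V' : Matrix n' m' ℂ} {μ' : m' → ℝ}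
    (hρ : Dg ρ U l) (hσ : Dg σ V μ) (hρ' : Dg ρ' U' l') (hσ' : Dg σ' V' μ') {s : ℝ} (hs : 0 < s)
    (hW : ∀ W', ∃ W, QQ s ρ' σ' W' ≤ QQ s ρ σ W) :
    FF s (V'ᴴ * U') l' μ' ≤ FF s (Vᴴ * U) l μ := by
  obtain ⟨W', h'⟩ := QQ_att hρ' hσ' s
  obtain ⟨W, h⟩ := hW W'
  rw [← h']
  exact h.trans (QQ_le hρ hσ hs W)

lemma sum_normSq_row {k m : Type*} [Fintype k] [DecidableEq k] [Fintype m] [DecidableEq m]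
    {c : Matrix m k ℂ} (h : c * cᴴ = 1) (j : m) : ∑ i, Complex.normSq (c j i) = 1 := by
  have := congrFun (congrFun h j) j
  rw [Matrix.mul_apply, Matrix.one_apply_eq] at this
  have := congrArg Complex.re this
  simpa [Complex.mul_conj] using this

lemma sum_normSq_col {k m : Type*} [Fintype k] [DecidableEq k] [Fintype m] [DecidableEq m]
    {c : Matrix m k ℂ} (h : cᴴ * c = 1) (i : k) : ∑ j, Complex.normSq (c j i) = 1 := by
  have := sum_normSq_row (c := cᴴ) (by simpa using h) i
  simpa using this

section
variable {n k m : Type*} [Fintype n] [DecidableEq n] [Fintype k] [DecidableEq k]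
    [Fintype m] [DecidableEq m]
    {ρ σ : Matrix n n ℂ} {U : Matrix n k ℂ} {l : k → ℝ} {V : Matrix n m ℂ} {μ : m → ℝ}

lemma c_h2 (hρ : Dg ρ U l) (hσ : Dg σ V μ) : (Vᴴ * U) * (Vᴴ * U)ᴴ = 1 := by
  calc (Vᴴ * U) * (Vᴴ * U)ᴴ = Vᴴ * (U * Uᴴ) * V := by simp [Matrix.mul_assoc]
    _ = 1 := by rw [hρ.h2, Matrix.mul_one, hσ.h1]

lemma c_h1 (hρ : Dg ρ U l) (hσ : Dg σ V μ) : (Vᴴ * U)ᴴ * (Vᴴ * U) = 1 := by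
  calc (Vᴴ * U)ᴴ * (Vᴴ * U) = Uᴴ * (V * Vᴴ) * U := by simp [Matrix.mul_assoc]
    _ = 1 := by rw [hσ.h2, Matrix.mul_one, hρ.h1]

/-- expectations in the basis V -/
def qv (ρ : Matrix n n ℂ) (V : Matrix n m ℂ) (j : m) : ℝ := ((Vᴴ * ρ * V) j j).re

lemma qv_eq (hρ : Dg ρ U l) (j : m) :
    qv ρ V j = ∑ i, Complex.normSq ((Vᴴ * U) j i) * l i := by
  have : Vᴴ * ρ * V = (Vᴴ * U) * Matrix.diagonal (fun i => (l i : ℂ)) * (Vᴴ * U)ᴴ := by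
    rw [hρ.eq]; simp [Matrix.mul_assoc]
  rw [qv, this, Matrix.mul_apply, Complex.re_sum]
  refine Finset.sum_congr rfl fun i _ => ?_
  rw [Matrix.mul_diagonal, Matrix.conjTranspose_apply, mul_right_comm, Complex.re_mul_ofReal]
  simp [Complex.mul_conj]

lemma qv_nonneg (hρ : Dg ρ U l) (j : m) : 0 ≤ qv ρ V j := by
  rw [qv_eq hρ]
  exact Finset.sum_nonneg fun i _ => mul_nonneg (Complex.normSq_nonneg _) (hρ.nn i)

lemma rel_eq (hρ : Dg ρ U l) (hσ : Dg σ V μ) :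
    ∑ j, ∑ i, Complex.normSq ((Vᴴ * U) j i) * l i * (Real.log (l i) - Real.log (μ j))
      = Real.log 2 * (- vN ρ - ∑ j, qv ρ V j * Real.logb 2 (μ j)) := by
  have hl : Real.log 2 ≠ 0 := (Real.log_pos (by norm_num)).ne'
  simp only [mul_sub, Finset.sum_sub_distrib]
  congr 1
  · rw [hρ.vN_eq, Finset.sum_comm, neg_neg, Finset.mul_sum]
    refine Finset.sum_congr rfl fun i _ => ?_
    simp only [mul_assoc]
    rw [← Finset.sum_mul, sum_normSq_col (c_h1 hρ hσ), Real.logb]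
    field_simp
  · rw [Finset.mul_sum]
    refine Finset.sum_congr rfl fun j _ => ?_
    rw [← Finset.sum_mul, qv_eq hρ, Real.logb]
    field_simp

lemma supp_of_qv (hρ : Dg ρ U l) (hs : ∀ j, μ j = 0 → qv ρ V j = 0) (j : m) (i : k)
    (h : μ j = 0) : Complex.normSq ((Vᴴ * U) j i) * l i = 0 := by
  have := hs j h
  rw [qv_eq hρ, Finset.sum_eq_zero_iff_of_nonneg
    (fun i _ => mul_nonneg (Complex.normSq_nonneg _) (hρ.nn i))] at this
  exact this i (Finset.mem_univ _)

lemma trace_dg (hρ : Dg ρ U l) : ρ.trace = ((∑ i, l i : ℝ) : ℂ) := by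
  rw [hρ.eq, Matrix.trace_mul_comm, ← Matrix.mul_assoc, hρ.h1, Matrix.one_mul, Matrix.trace_diagonal]
  push_cast; rfl

lemma sum_qv (hρ : Dg ρ U l) (hσ : Dg σ V μ) :
    ∑ j, ∑ i, Complex.normSq ((Vᴴ * U) j i) * l i = ∑ i, l i := by
  rw [Finset.sum_comm]
  refine Finset.sum_congr rfl fun i _ => ?_
  rw [← Finset.sum_mul, sum_normSq_col (c_h1 hρ hσ), one_mul]

end

def rr (l μ : ℝ) : ℝ := if l = 0 ∨ μ = 0 then 1 else μ / l

lemma rr_pos {l μ : ℝ} (hl : 0 ≤ l) (hμ : 0 ≤ μ) : 0 < rr l μ := by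
  unfold rr
  split_ifs with h
  · norm_num
  · push Not at h
    have := h.1.symm.lt_of_le hl
    have := h.2.symm.lt_of_le hμ
    positivity

lemma rr_div {w l μ s : ℝ} (hl : 0 ≤ l) (hμ : 0 ≤ μ) (hs : 0 < s) (h : μ = 0 → w * l = 0) :
    w * l / (s + rr l μ) = w * l ^ 2 / (s * l + μ) := by
  by_cases h1 : l = 0
  · simp [h1]
  by_cases h2 : μ = 0
  · have : w = 0 := by simpa [h1] using h h2
    simp [this]
  have a := (Ne.symm h1).lt_of_le hl
  have b := (Ne.symm h2).lt_of_le hμ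
  simp only [rr, h1, h2, or_self, if_false]
  field_simp

lemma rr_log {w l μ : ℝ} (h : μ = 0 → w * l = 0) :
    w * l * Real.log (rr l μ) = -(w * l * (Real.log l - Real.log μ)) := by
  by_cases h1 : l = 0
  · simp [h1]
  by_cases h2 : μ = 0
  · have : w = 0 := by simpa [h1] using h h2
    simp [this]
  simp only [rr, h1, h2, or_self, if_false]
  rw [Real.log_div h2 h1]
  ring

theorem rel_mono {n k m n' k' m' : Type*} [Fintype n] [DecidableEq n] [Fintype k] [DecidableEq k]
    [Fintype m] [DecidableEq m] [Fintype n'] [DecidableEq n'] [Fintype k'] [DecidableEq k']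
    [Fintype m'] [DecidableEq m']
    {ρ σ : Matrix n n ℂ} {U : Matrix n k ℂ} {l : k → ℝ} {V : Matrix n m ℂ} {μ : m → ℝ}
    {ρ' σ' : Matrix n' n' ℂ} {U' : Matrix n' k' ℂ} {l' : k' → ℝ} {V' : Matrix n' m' ℂ} {μ' : m' → ℝ}
    (hρ : Dg ρ U l) (hσ : Dg σ V μ) (hρ' : Dg ρ' U' l') (hσ' : Dg σ' V' μ')
    (ht : ρ.trace = ρ'.trace)
    (hsu : ∀ j, μ j = 0 → qv ρ V j = 0) (hsu' : ∀ j, μ' j = 0 → qv ρ' V' j = 0)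
    (hW : ∀ s : ℝ, 0 < s → ∀ W', ∃ W, QQ s ρ' σ' W' ≤ QQ s ρ σ W) :
    - vN ρ' - ∑ j, qv ρ' V' j * Real.logb 2 (μ' j) ≤ - vN ρ - ∑ j, qv ρ V j * Real.logb 2 (μ j) := by
  have h1 := supp_of_qv hρ hsu
  have h1' := supp_of_qv hρ' hsu'
  have hl2 : 0 < Real.log 2 := Real.log_pos (by norm_num)
  refine le_of_mul_le_mul_left ?_ hl2
  rw [← rel_eq hρ hσ, ← rel_eq hρ' hσ']
  have key := aux_log_int
    (fun x : m × k => Complex.normSq ((Vᴴ * U) x.1 x.2) * l x.2) (fun x => rr (l x.2) (μ x.1))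
    (fun x : m' × k' => Complex.normSq ((V'ᴴ * U') x.1 x.2) * l' x.2) (fun x => rr (l' x.2) (μ' x.1))
    (fun x => rr_pos (hρ.nn _) (hσ.nn _)) (fun x => rr_pos (hρ'.nn _) (hσ'.nn _)) ?_ ?_
  · simp only [Fintype.sum_prod_type] at key
    simp only [rr_log (h1 _ _), rr_log (h1' _ _), Finset.sum_neg_distrib] at key
    linarith
  · simp only [Fintype.sum_prod_type]
    rw [sum_qv hρ hσ, sum_qv hρ' hσ']
    rw [trace_dg hρ, trace_dg hρ'] at ht
    exact_mod_cast ht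
  · intro s hs
    simp only [Fintype.sum_prod_type]
    simp only [rr_div (hρ.nn _) (hσ.nn _) hs (h1 _ _), rr_div (hρ'.nn _) (hσ'.nn _) hs (h1' _ _)]
    exact FF_mono hρ hσ hρ' hσ' hs (hW s hs)

lemma aux_hell {w l μ : ℝ} (hw : 0 ≤ w) (hl : 0 ≤ l) (hμ : 0 ≤ μ) (h : μ = 0 → w * l = 0) :
    w * (2 * l - 2 * (√l * √μ)) ≤ w * l * (Real.log l - Real.log μ) := by
  by_cases h1 : l = 0
  · simp [h1]
  by_cases h2 : μ = 0
  · have : w = 0 := by simpa [h1] using h h2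
    simp [this]
  have a := (Ne.symm h1).lt_of_le hl
  have b := (Ne.symm h2).lt_of_le hμ
  have sa := Real.sqrt_pos.2 a
  have sb := Real.sqrt_pos.2 b
  have h3 := Real.log_le_sub_one_of_pos (div_pos sb sa)
  rw [Real.log_div sb.ne' sa.ne', Real.log_sqrt hμ, Real.log_sqrt hl] at h3
  rw [mul_assoc]
  refine mul_le_mul_of_nonneg_left ?_ hw
  have h4 : l * (√μ / √l) = √l * √μ := by
    have : l = √l * √l := (Real.mul_self_sqrt hl).symm
    field_simp
    rw [Real.sq_sqrt hl]
  nlinarith [mul_le_mul_of_nonneg_left h3 hl]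

theorem pinsker {n k m : Type*} [Fintype n] [DecidableEq n] [Fintype k] [DecidableEq k]
    [Fintype m] [DecidableEq m]
    {ρ σ : Matrix n n ℂ} {U : Matrix n k ℂ} {l : k → ℝ} {V : Matrix n m ℂ} {μ : m → ℝ}
    (hρ : Dg ρ U l) (hσ : Dg σ V μ) (ht : ρ.trace = 1) (ht' : σ.trace = 1)
    (hsu : ∀ j, μ j = 0 → qv ρ V j = 0) :
    traceNorm (ρ - σ) ^ 2 ≤ 4 * (Real.log 2 * (- vN ρ - ∑ j, qv ρ V j * Real.logb 2 (μ j))) := by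
  have h1 := supp_of_qv hρ hsu
  rw [← rel_eq hρ hσ]
  unfold traceNorm
  split_ifs with hM
  swap
  · have : 0 ≤ ∑ j, ∑ i, Complex.normSq ((Vᴴ * U) j i) * (√(l i) - √(μ j)) ^ 2 :=
      Finset.sum_nonneg fun j _ => Finset.sum_nonneg fun i _ =>
        mul_nonneg (Complex.normSq_nonneg _) (sq_nonneg _)
    exact absurd (by
      rw [hρ.eq, hσ.eq]
      have hd : ∀ {k : Type _} [Fintype k] [DecidableEq k] (l : k → ℝ),
          (Matrix.diagonal (fun i => (l i : ℂ))).IsHermitian := by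
        intro k _ _ l
        rw [Matrix.isHermitian_diagonal_iff]
        intro i
        simp [IsSelfAdjoint]
      have hd' : (Matrix.diagonal (fun i => (μ i : ℂ))).IsHermitian := by
        rw [Matrix.isHermitian_diagonal_iff]
        intro i
        simp [IsSelfAdjoint]
      exact (Matrix.isHermitian_mul_mul_conjTranspose U (hd l)).sub
        (Matrix.isHermitian_mul_mul_conjTranspose V hd')) hM
  have sl : ∑ i, l i = 1 := by rw [trace_dg hρ] at ht; exact_mod_cast ht
  have sμ : ∑ i, μ i = 1 := by rw [trace_dg hσ] at ht'; exact_mod_cast ht'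
  -- Hellinger part
  have hell : ∑ j, ∑ i, Complex.normSq ((Vᴴ * U) j i) * (√(l i) - √(μ j)) ^ 2 ≤
      ∑ j, ∑ i, Complex.normSq ((Vᴴ * U) j i) * l i * (Real.log (l i) - Real.log (μ j)) := by
    have e1 := sum_qv hρ hσ
    have e2 : ∑ j, ∑ i, Complex.normSq ((Vᴴ * U) j i) * μ j = ∑ j, μ j := by
      refine Finset.sum_congr rfl fun j _ => ?_
      rw [← Finset.sum_mul, sum_normSq_row (c_h2 hρ hσ), one_mul]
    have e3 : ∑ j, ∑ i, Complex.normSq ((Vᴴ * U) j i) * (√(l i) - √(μ j)) ^ 2 =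
        ∑ j, ∑ i, Complex.normSq ((Vᴴ * U) j i) * (2 * l i - 2 * (√(l i) * √(μ j))) := by
      have : ∑ j, ∑ i, Complex.normSq ((Vᴴ * U) j i) * (√(l i) - √(μ j)) ^ 2 =
        ∑ j, ∑ i, Complex.normSq ((Vᴴ * U) j i) * (2 * l i - 2 * (√(l i) * √(μ j)))
         - ∑ j, ∑ i, Complex.normSq ((Vᴴ * U) j i) * l i
         + ∑ j, ∑ i, Complex.normSq ((Vᴴ * U) j i) * μ j := by
        simp only [← Finset.sum_sub_distrib, ← Finset.sum_add_distrib]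
        refine Finset.sum_congr rfl fun j _ => Finset.sum_congr rfl fun i _ => ?_
        have a := Real.sq_sqrt (hρ.nn i)
        have b := Real.sq_sqrt (hσ.nn j)
        rw [sub_sq, a, b]
        ring
      rw [this, e1, e2, sl, sμ]; ring
    rw [e3]
    exact Finset.sum_le_sum fun j _ => Finset.sum_le_sum fun i _ =>
      aux_hell (Complex.normSq_nonneg _) (hρ.nn i) (hσ.nn j) (h1 j i)
  -- sign unitary
  set Y : Matrix n n ℂ := (hM.eigenvectorUnitary : Matrix n n ℂ) with hY
  have y1 : Yᴴ * Y = 1 := Unitary.coe_star_mul_self _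
  have y2 : Y * Yᴴ = 1 := Unitary.coe_mul_star_self _
  have yM : ρ - σ = Y * Matrix.diagonal (fun i => (hM.eigenvalues i : ℂ)) * Yᴴ := by
    have := hM.spectral_theorem
    rw [Unitary.conjStarAlgAut_apply] at this
    exact this
  set sg : n → ℂ := fun i => if 0 ≤ hM.eigenvalues i then 1 else -1 with hsg
  set S : Matrix n n ℂ := Y * Matrix.diagonal sg * Yᴴ with hS
  have sS : (Matrix.diagonal sg)ᴴ = Matrix.diagonal sg := by
    rw [Matrix.diagonal_conjTranspose]
    congr 1
    ext i
    simp only [hsg, Pi.star_apply]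
    split_ifs <;> simp
  have sS2 : Matrix.diagonal sg * Matrix.diagonal sg = 1 := by
    rw [Matrix.diagonal_mul_diagonal, ← Matrix.diagonal_one]
    congr 1
    ext i
    simp only [hsg]
    split_ifs <;> simp
  have S1 : Sᴴ = S := by
    simp only [hS, Matrix.conjTranspose_mul, Matrix.conjTranspose_conjTranspose, sS, Matrix.mul_assoc]
  have S2 : S * S = 1 := by
    calc S * S = Y * Matrix.diagonal sg * (Yᴴ * Y) * Matrix.diagonal sg * Yᴴ := by
          simp [hS, Matrix.mul_assoc]
      _ = Y * (Matrix.diagonal sg * Matrix.diagonal sg) * Yᴴ := by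
          rw [y1]; simp [Matrix.mul_assoc]
      _ = 1 := by rw [sS2, Matrix.mul_one, y2]
  have tn : ((∑ i, |hM.eigenvalues i| : ℝ) : ℂ) = trace (S * (ρ - σ)) := by
    refine Eq.trans ?_ (congrArg (fun M => trace (S * M)) yM).symm
    calc _ = trace (Matrix.diagonal sg * Matrix.diagonal (fun i => (hM.eigenvalues i : ℂ))) := by
          rw [Matrix.diagonal_mul_diagonal, Matrix.trace_diagonal]
          push_cast
          refine Finset.sum_congr rfl fun i _ => ?_
          simp only [hsg]
          split_ifs with h
          · rw [abs_of_nonneg h, one_mul]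
          · rw [abs_of_neg (not_le.1 h)]; simp
      _ = trace (Matrix.diagonal sg * (Yᴴ * Y) * Matrix.diagonal (fun i => (hM.eigenvalues i : ℂ)) * (Yᴴ * Y)) := by
          rw [y1, Matrix.mul_one, Matrix.mul_one]
      _ = trace (Y * (Matrix.diagonal sg * (Yᴴ * Y) * Matrix.diagonal (fun i => (hM.eigenvalues i : ℂ)) * Yᴴ)) := by
          rw [Matrix.trace_mul_comm Y]; simp only [Matrix.mul_assoc]
      _ = _ := by simp only [hS, Matrix.mul_assoc]
  set T : Matrix m k ℂ := Vᴴ * S * U with hT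
  have T1 : T * Tᴴ = 1 := by
    calc T * Tᴴ = Vᴴ * S * (U * Uᴴ) * Sᴴ * V := by simp [hT, Matrix.mul_assoc]
      _ = Vᴴ * (S * S) * V := by rw [hρ.h2, S1]; simp [Matrix.mul_assoc]
      _ = 1 := by rw [S2, Matrix.mul_one, hσ.h1]
  have T2 : Tᴴ * T = 1 := by
    calc Tᴴ * T = Uᴴ * Sᴴ * (V * Vᴴ) * S * U := by simp [hT, Matrix.mul_assoc]
      _ = Uᴴ * (S * S) * U := by rw [hσ.h2, S1]; simp [Matrix.mul_assoc]
      _ = 1 := by rw [S2, Matrix.mul_one, hρ.h1]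
  have tr2 : trace (S * (ρ - σ)) = ∑ j, ∑ i, T j i * (star ((Vᴴ * U) j i) * ((l i - μ j : ℝ) : ℂ)) := by
    have hN : Uᴴ * (ρ - σ) * V = Matrix.diagonal (fun i => (l i : ℂ)) * (Vᴴ * U)ᴴ
        - (Vᴴ * U)ᴴ * Matrix.diagonal (fun i => (μ i : ℂ)) := by
      have a1 : Uᴴ * ρ * V = Matrix.diagonal (fun i => (l i : ℂ)) * (Vᴴ * U)ᴴ := by
        calc _ = (Uᴴ * U) * Matrix.diagonal (fun i => (l i : ℂ)) * (Vᴴ * U)ᴴ := by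
              rw [hρ.eq]; simp [Matrix.mul_assoc]
          _ = _ := by rw [hρ.h1, Matrix.one_mul]
      have a2 : Uᴴ * σ * V = (Vᴴ * U)ᴴ * Matrix.diagonal (fun i => (μ i : ℂ)) := by
        calc _ = (Vᴴ * U)ᴴ * Matrix.diagonal (fun i => (μ i : ℂ)) * (Vᴴ * V) := by
              rw [hσ.eq]; simp [Matrix.mul_assoc]
          _ = _ := by rw [hσ.h1, Matrix.mul_one]
      rw [← a1, ← a2, Matrix.mul_sub, Matrix.sub_mul]
    calc _ = trace ((V * Vᴴ) * S * (U * Uᴴ) * (ρ - σ)) := by rw [hσ.h2, hρ.h2]; simp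
      _ = trace (V * (T * (Uᴴ * (ρ - σ)))) := by simp [hT, Matrix.mul_assoc]
      _ = trace (T * (Uᴴ * (ρ - σ) * V)) := by rw [Matrix.trace_mul_comm]; simp [Matrix.mul_assoc]
      _ = _ := by
        rw [hN]
        rw [Matrix.trace]
        refine Finset.sum_congr rfl fun j _ => ?_
        rw [Matrix.diag_apply, Matrix.mul_apply]
        refine Finset.sum_congr rfl fun i _ => ?_
        rw [Matrix.sub_apply, Matrix.diagonal_mul, Matrix.mul_diagonal, Matrix.conjTranspose_apply]
        push_cast
        ring
  have bd : ∑ i, |hM.eigenvalues i| ≤ ∑ x : m × k,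
      (‖T x.1 x.2‖ * (√(l x.2) + √(μ x.1))) * (‖(Vᴴ * U) x.1 x.2‖ * |√(l x.2) - √(μ x.1)|) := by
    have : (∑ i, |hM.eigenvalues i|) = ‖trace (S * (ρ - σ))‖ := by
      rw [← tn, Complex.norm_real, Real.norm_of_nonneg (Finset.sum_nonneg fun i _ => abs_nonneg _)]
    rw [this, tr2, ← Fintype.sum_prod_type']
    refine (norm_sum_le _ _).trans (Finset.sum_le_sum fun x _ => le_of_eq ?_)
    rw [norm_mul, norm_mul, norm_star, Complex.norm_real, Real.norm_eq_abs]
    have : |l x.2 - μ x.1| = (√(l x.2) + √(μ x.1)) * |√(l x.2) - √(μ x.1)| := by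
      rw [← abs_of_nonneg (a := √(l x.2) + √(μ x.1)) (by positivity), ← abs_mul]
      congr 1
      have a := Real.sq_sqrt (hρ.nn x.2)
      have b := Real.sq_sqrt (hσ.nn x.1)
      linear_combination b - a
    rw [this]; ring
  have b1 : ∑ x : m × k, (‖T x.1 x.2‖ * (√(l x.2) + √(μ x.1))) ^ 2 ≤ 4 := by
    have t1 : ∑ j, ∑ i, Complex.normSq (T j i) * l i = 1 := by
      rw [Finset.sum_comm, ← sl]
      refine Finset.sum_congr rfl fun i _ => ?_
      rw [← Finset.sum_mul, sum_normSq_col T2, one_mul]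
    have t2 : ∑ j, ∑ i, Complex.normSq (T j i) * μ j = 1 := by
      rw [← sμ]
      refine Finset.sum_congr rfl fun i _ => ?_
      rw [← Finset.sum_mul, sum_normSq_row T1, one_mul]
    calc _ ≤ ∑ x : m × k, (2 * (Complex.normSq (T x.1 x.2) * l x.2) + 2 * (Complex.normSq (T x.1 x.2) * μ x.1)) := by
          refine Finset.sum_le_sum fun x _ => ?_
          rw [mul_pow, ← Complex.normSq_eq_norm_sq]
          have a := Real.sq_sqrt (hρ.nn x.2)
          have b := Real.sq_sqrt (hσ.nn x.1)
          have : (√(l x.2) + √(μ x.1)) ^ 2 ≤ 2 * l x.2 + 2 * μ x.1 := by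
            nlinarith [sq_nonneg (√(l x.2) - √(μ x.1))]
          nlinarith [mul_le_mul_of_nonneg_left this (Complex.normSq_nonneg (T x.1 x.2))]
      _ = 4 := by
          rw [Finset.sum_add_distrib, ← Finset.mul_sum, ← Finset.mul_sum,
            Fintype.sum_prod_type, Fintype.sum_prod_type, t1, t2]
          norm_num
  have b2 : ∑ x : m × k, (‖(Vᴴ * U) x.1 x.2‖ * |√(l x.2) - √(μ x.1)|) ^ 2
      = ∑ j, ∑ i, Complex.normSq ((Vᴴ * U) j i) * (√(l i) - √(μ j)) ^ 2 := by
    rw [Fintype.sum_prod_type]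
    refine Finset.sum_congr rfl fun j _ => Finset.sum_congr rfl fun i _ => ?_
    rw [mul_pow, sq_abs, Complex.normSq_eq_norm_sq]
  have p0 : 0 ≤ ∑ i, |hM.eigenvalues i| := Finset.sum_nonneg fun i _ => abs_nonneg _
  have p1 : 0 ≤ ∑ j, ∑ i, Complex.normSq ((Vᴴ * U) j i) * (√(l i) - √(μ j)) ^ 2 :=
    Finset.sum_nonneg fun j _ => Finset.sum_nonneg fun i _ =>
      mul_nonneg (Complex.normSq_nonneg _) (sq_nonneg _)
  calc _ ≤ (∑ x : m × k,
      (‖T x.1 x.2‖ * (√(l x.2) + √(μ x.1))) * (‖(Vᴴ * U) x.1 x.2‖ * |√(l x.2) - √(μ x.1)|)) ^ 2 :=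
        pow_le_pow_left₀ p0 bd 2
    _ ≤ _ := Finset.sum_mul_sq_le_sq_mul_sq _ _ _
    _ ≤ 4 * _ := mul_le_mul b1 (b2.le.trans hell) (by rw [b2]; exact p1) (by norm_num)

set_option linter.unusedSectionVars false

section kron
variable {a c k m : Type*} [Fintype a] [DecidableEq a] [Fintype c] [DecidableEq c]
  [Fintype k] [DecidableEq k] [Fintype m] [DecidableEq m]

lemma Dg.kron {α : Matrix a a ℂ} {β : Matrix c c ℂ} {U : Matrix a k ℂ} {V : Matrix c m ℂ}
    {l : k → ℝ} {μ : m → ℝ} (h : Dg α U l) (h' : Dg β V μ) :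
    Dg (α ⊗ₖ β) (U ⊗ₖ V) (fun x => l x.1 * μ x.2) := by
  refine ⟨?_, ?_, ?_, fun x => mul_nonneg (h.nn _) (h'.nn _)⟩
  · rw [Matrix.conjTranspose_kronecker, ← Matrix.mul_kronecker_mul, h.h1, h'.h1, Matrix.one_kronecker_one]
  · rw [Matrix.conjTranspose_kronecker, ← Matrix.mul_kronecker_mul, h.h2, h'.h2, Matrix.one_kronecker_one]
  · rw [Matrix.conjTranspose_kronecker]
    have : Matrix.diagonal (fun x : k × m => ((l x.1 * μ x.2 : ℝ) : ℂ)) =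
        Matrix.diagonal (fun i => (l i : ℂ)) ⊗ₖ Matrix.diagonal (fun i => (μ i : ℂ)) := by
      rw [Matrix.diagonal_kronecker_diagonal]
      congr 1
      ext x
      push_cast; rfl
    rw [this, ← Matrix.mul_kronecker_mul, ← Matrix.mul_kronecker_mul, ← h.eq, ← h'.eq]

lemma Dg.const (κ : ℝ) (hκ : 0 ≤ κ) : Dg ((κ : ℂ) • (1 : Matrix a a ℂ)) (1 : Matrix a a ℂ) (fun _ => κ) := by
  refine ⟨by simp, by simp, ?_, fun _ => hκ⟩
  ext i j
  by_cases h : i = j <;> simp [h, Matrix.diagonal]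

lemma Dg.qv_self {α : Matrix a a ℂ} {U : Matrix a k ℂ} {l : k → ℝ} (h : Dg α U l) (j : k) :
    qv α U j = l j := by
  have : Uᴴ * α * U = Matrix.diagonal (fun i => (l i : ℂ)) := by
    calc Uᴴ * α * U = (Uᴴ * U) * Matrix.diagonal (fun i => (l i : ℂ)) * (Uᴴ * U) := by
          rw [h.eq]; simp [Matrix.mul_assoc]
      _ = _ := by rw [h.h1]; simp
  rw [qv, this]; simp

lemma trace_r2B (M : Matrix (a × c) (a × c) ℂ) (X : Matrix c c ℂ) :
    trace (M * ((1 : Matrix a a ℂ) ⊗ₖ X)) = trace (r2B M * X) := by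
  simp only [Matrix.trace, Matrix.diag_apply, Matrix.mul_apply, Fintype.sum_prod_type,
    Matrix.kroneckerMap_apply, Matrix.one_apply, r2B, Matrix.of_apply, Finset.sum_mul, ite_mul,
    one_mul, zero_mul, mul_ite, mul_zero]
  rw [Finset.sum_comm]
  refine Finset.sum_congr rfl fun p _ => ?_
  rw [Finset.sum_comm]
  conv_lhs => enter [2, i]; rw [Finset.sum_comm]
  rw [Finset.sum_comm]
  refine Finset.sum_congr rfl fun q _ => ?_
  rw [Finset.sum_comm]
  refine Finset.sum_congr rfl fun i _ => ?_
  simp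

lemma trace_r2A (M : Matrix (a × c) (a × c) ℂ) (X : Matrix a a ℂ) :
    trace (M * (X ⊗ₖ (1 : Matrix c c ℂ))) = trace (r2A M * X) := by
  simp only [Matrix.trace, Matrix.diag_apply, Matrix.mul_apply, Fintype.sum_prod_type,
    Matrix.kroneckerMap_apply, Matrix.one_apply, r2A, Matrix.of_apply, Finset.sum_mul,
    mul_one, mul_zero, mul_ite]
  refine Finset.sum_congr rfl fun p _ => ?_
  rw [Finset.sum_comm]
  refine Finset.sum_congr rfl fun q _ => ?_
  refine Finset.sum_congr rfl fun i _ => ?_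
  simp

lemma entry_trace (M : Matrix m m ℂ) (j : m) : M j j = trace (M * Matrix.single j j (1 : ℂ)) := by
  simp [Matrix.trace_mul_single]

lemma qv_trace {ρ : Matrix a a ℂ} {V : Matrix a m ℂ} (j : m) :
    qv ρ V j = (trace (ρ * (V * Matrix.single j j (1 : ℂ) * Vᴴ))).re := by
  rw [qv, entry_trace (Vᴴ * ρ * V), Matrix.mul_assoc, Matrix.mul_assoc, Matrix.trace_mul_comm]
  simp only [Matrix.mul_assoc]

lemma sum_qv_B {ρ : Matrix (a × c) (a × c) ℂ} {U : Matrix a k ℂ} (hU : U * Uᴴ = 1)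
    (V : Matrix c m ℂ) (j : m) : ∑ x, qv ρ (U ⊗ₖ V) (x, j) = qv (r2B ρ) V j := by
  have h1 : ∑ x, qv ρ (U ⊗ₖ V) (x, j) = (r2B ((U ⊗ₖ V)ᴴ * ρ * (U ⊗ₖ V)) j j).re := by
    simp only [r2B, Matrix.of_apply, Complex.re_sum, qv]
  rw [h1, entry_trace (r2B ((U ⊗ₖ V)ᴴ * ρ * (U ⊗ₖ V))), ← trace_r2B, qv_trace, ← trace_r2B,
    Matrix.mul_assoc, Matrix.mul_assoc, Matrix.trace_mul_comm, ← hU]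
  congr 2
  rw [Matrix.mul_kronecker_mul, Matrix.conjTranspose_kronecker, ← Matrix.mul_kronecker_mul,
    Matrix.mul_one, Matrix.mul_assoc, ← Matrix.mul_kronecker_mul]

lemma sum_qv_A {ρ : Matrix (a × c) (a × c) ℂ} {V : Matrix c m ℂ} (hV : V * Vᴴ = 1)
    (U : Matrix a k ℂ) (i : k) : ∑ y, qv ρ (U ⊗ₖ V) (i, y) = qv (r2A ρ) U i := by
  have h1 : ∑ y, qv ρ (U ⊗ₖ V) (i, y) = (r2A ((U ⊗ₖ V)ᴴ * ρ * (U ⊗ₖ V)) i i).re := by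
    simp only [r2A, Matrix.of_apply, Complex.re_sum, qv]
  rw [h1, entry_trace (r2A ((U ⊗ₖ V)ᴴ * ρ * (U ⊗ₖ V))), ← trace_r2A, qv_trace, ← trace_r2A,
    Matrix.mul_assoc, Matrix.mul_assoc, Matrix.trace_mul_comm, ← hV]
  congr 2
  rw [Matrix.mul_kronecker_mul, Matrix.conjTranspose_kronecker, ← Matrix.mul_kronecker_mul,
    Matrix.mul_one, Matrix.mul_assoc, ← Matrix.mul_kronecker_mul]

/-- support and value for `κ 1 ⊗ ρ_B` -/
lemma kron_supp {n' : Type*} [Fintype n'] [DecidableEq n'] {ρ : Matrix (a × c) (a × c) ℂ}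
    {U : Matrix (a × c) n' ℂ} {l : n' → ℝ}
    (hρ : Dg ρ U l) {V : Matrix c m ℂ} {μ : m → ℝ} (hB : Dg (r2B ρ) V μ) {κ : ℝ} (hκ : 0 < κ)
    (j : a × m) (h : κ * μ j.2 = 0) : qv ρ ((1 : Matrix a a ℂ) ⊗ₖ V) j = 0 := by
  have h1 : μ j.2 = 0 := by simpa [hκ.ne'] using h
  have h2 := sum_qv_B (ρ := ρ) (U := (1 : Matrix a a ℂ)) (by simp) V j.2
  rw [hB.qv_self, h1, Finset.sum_eq_zero_iff_of_nonneg (fun i _ => qv_nonneg hρ _)] at h2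
  exact h2 j.1 (Finset.mem_univ _)

lemma kron_val {ρ : Matrix (a × c) (a × c) ℂ} {V : Matrix c m ℂ} {μ : m → ℝ}
    (hB : Dg (r2B ρ) V μ) {κ : ℝ} (hκ : 0 < κ) :
    ∑ j : a × m, qv ρ ((1 : Matrix a a ℂ) ⊗ₖ V) j * Real.logb 2 (κ * μ j.2)
      = - vN (r2B ρ) + (∑ i, μ i) * Real.logb 2 κ := by
  rw [Fintype.sum_prod_type, Finset.sum_comm, hB.vN_eq, neg_neg, Finset.sum_mul,
    ← Finset.sum_add_distrib]
  refine Finset.sum_congr rfl fun j _ => ?_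
  simp only
  rw [← Finset.sum_mul, sum_qv_B (by simp), hB.qv_self]
  by_cases h : μ j = 0
  · simp [h]
  · rw [Real.logb_mul hκ.ne' h]; ring

theorem mutual_bound {ρ : Matrix (a × c) (a × c) ℂ} (hρ : ρ.PosSemidef) (ht : ρ.trace = 1)
    (hA : (r2A ρ).PosSemidef) (hB : (r2B ρ).PosSemidef) :
    traceNorm (ρ - r2A ρ ⊗ₖ r2B ρ) ^ 2
      ≤ 4 * (Real.log 2 * (- vN ρ + vN (r2A ρ) + vN (r2B ρ))) := by
  obtain ⟨U, l, h⟩ := Dg.exists hρ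
  obtain ⟨UA, α, h1⟩ := Dg.exists hA
  obtain ⟨UB, β, h2⟩ := Dg.exists hB
  have tA : (r2A ρ).trace = 1 := by
    rw [← ht]; simp [Matrix.trace, r2A, Fintype.sum_prod_type]
  have tB : (r2B ρ).trace = 1 := by
    rw [← ht]; simp only [Matrix.trace, r2B, Fintype.sum_prod_type, Matrix.diag_apply, Matrix.of_apply]
    rw [Finset.sum_comm]
  have s1 : ∀ j : a × c, α j.1 = 0 → qv ρ (UA ⊗ₖ UB) j = 0 := by
    intro j h0
    have h3 := sum_qv_A (ρ := ρ) (V := UB) h2.h2 UA j.1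
    rw [h1.qv_self, h0, Finset.sum_eq_zero_iff_of_nonneg (fun i _ => qv_nonneg h _)] at h3
    exact h3 j.2 (Finset.mem_univ _)
  have s2 : ∀ j : a × c, β j.2 = 0 → qv ρ (UA ⊗ₖ UB) j = 0 := by
    intro j h0
    have h3 := sum_qv_B (ρ := ρ) (U := UA) h1.h2 UB j.2
    rw [h2.qv_self, h0, Finset.sum_eq_zero_iff_of_nonneg (fun i _ => qv_nonneg h _)] at h3
    exact h3 j.1 (Finset.mem_univ _)
  have := pinsker h (h1.kron h2) ht (by rw [Matrix.trace_kronecker, tA, tB, one_mul]) (by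
    intro j hj
    rcases mul_eq_zero.1 hj with h0 | h0
    · exact s1 j h0
    · exact s2 j h0)
  refine this.trans (le_of_eq ?_)
  congr 2
  have e : ∑ j : a × c, qv ρ (UA ⊗ₖ UB) j * Real.logb 2 (α j.1 * β j.2)
      = ∑ j : a × c, qv ρ (UA ⊗ₖ UB) j * Real.logb 2 (α j.1)
        + ∑ j : a × c, qv ρ (UA ⊗ₖ UB) j * Real.logb 2 (β j.2) := by
    rw [← Finset.sum_add_distrib]
    refine Finset.sum_congr rfl fun j _ => ?_
    by_cases h0 : α j.1 = 0
    · simp [s1 j h0]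
    by_cases h0' : β j.2 = 0
    · simp [s2 j h0']
    rw [Real.logb_mul h0 h0', mul_add]
  have eA : ∑ j : a × c, qv ρ (UA ⊗ₖ UB) j * Real.logb 2 (α j.1) = - vN (r2A ρ) := by
    rw [Fintype.sum_prod_type, h1.vN_eq, neg_neg]
    refine Finset.sum_congr rfl fun i _ => ?_
    simp only
    rw [← Finset.sum_mul, sum_qv_A h2.h2, h1.qv_self]
  have eB : ∑ j : a × c, qv ρ (UA ⊗ₖ UB) j * Real.logb 2 (β j.2) = - vN (r2B ρ) := by
    rw [Fintype.sum_prod_type, Finset.sum_comm, h2.vN_eq, neg_neg]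
    refine Finset.sum_congr rfl fun i _ => ?_
    simp only
    rw [← Finset.sum_mul, sum_qv_B h1.h2, h2.qv_self]
  rw [e, eA, eB]
  ring

end kron

section ssa
variable {a b e r : Type*} [Fintype a] [DecidableEq a] [Fintype b] [DecidableEq b]
  [Fintype e] [DecidableEq e] [Fintype r] [DecidableEq r]

lemma r2A_psd {M : Matrix (a × b) (a × b) ℂ} (h : M.PosSemidef) : (r2A M).PosSemidef := by
  have : r2A M = ∑ y : b, M.submatrix (fun i => (i, y)) (fun i => (i, y)) := by
    ext i j; simp [r2A, Matrix.sum_apply]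
  rw [this]
  exact Matrix.posSemidef_sum _ fun y _ => h.submatrix _

lemma r2B_psd {M : Matrix (a × b) (a × b) ℂ} (h : M.PosSemidef) : (r2B M).PosSemidef := by
  have : r2B M = ∑ y : a, M.submatrix (fun i => (y, i)) (fun i => (y, i)) := by
    ext i j; simp [r2B, Matrix.sum_apply]
  rw [this]
  exact Matrix.posSemidef_sum _ fun y _ => h.submatrix _

lemma rAB_psd {M : Matrix (a × b × e) (a × b × e) ℂ} (h : M.PosSemidef) : (rAB M).PosSemidef := by
  have : rAB M = ∑ y : e, M.submatrix (fun i : a × b => (i.1, i.2, y)) (fun i => (i.1, i.2, y)) := by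
    ext i j; simp [rAB, Matrix.sum_apply]
  rw [this]
  exact Matrix.posSemidef_sum _ fun y _ => h.submatrix _

lemma rAE_psd {M : Matrix (a × b × e) (a × b × e) ℂ} (h : M.PosSemidef) : (rAE M).PosSemidef := by
  have : rAE M = ∑ y : b, M.submatrix (fun i : a × e => (i.1, y, i.2)) (fun i => (i.1, y, i.2)) := by
    ext i j; simp [rAE, Matrix.sum_apply]
  rw [this]
  exact Matrix.posSemidef_sum _ fun y _ => h.submatrix _

def extR (r : Type*) [DecidableEq r] (X : Matrix (a × e) (a × e) ℂ) : Matrix (a × e × r) (a × e × r) ℂ :=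
  (X ⊗ₖ (1 : Matrix r r ℂ)).submatrix (Equiv.prodAssoc a e r).symm (Equiv.prodAssoc a e r).symm

lemma extR_mul (X Y : Matrix (a × e) (a × e) ℂ) : extR r X * extR r Y = extR r (X * Y) := by
  unfold extR
  rw [Matrix.submatrix_mul_equiv, ← Matrix.mul_kronecker_mul, Matrix.mul_one]

lemma extR_conj (X : Matrix (a × e) (a × e) ℂ) : (extR r X)ᴴ = extR r Xᴴ := by
  unfold extR
  rw [Matrix.conjTranspose_submatrix, Matrix.conjTranspose_kronecker, Matrix.conjTranspose_one]

lemma trace_submatrix_equiv' {n m : Type*} [Fintype n] [Fintype m] (f : n ≃ m) (M : Matrix m m ℂ) :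
    trace (M.submatrix f f) = trace M := by
  simp only [Matrix.trace, Matrix.diag_apply, Matrix.submatrix_apply]
  exact Equiv.sum_comp f (fun i => M i i)

lemma trace_extR (τ : Matrix (a × e × r) (a × e × r) ℂ) (X : Matrix (a × e) (a × e) ℂ) :
    trace (τ * extR r X) = trace (rAB τ * X) := by
  have h : τ = (τ.submatrix (Equiv.prodAssoc a e r) (Equiv.prodAssoc a e r)).submatrix
    (Equiv.prodAssoc a e r).symm (Equiv.prodAssoc a e r).symm := by simp
  conv_lhs => rw [h]
  unfold extR
  rw [Matrix.submatrix_mul_equiv, trace_submatrix_equiv', trace_r2A]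
  rfl

lemma QQ_extR (s : ℝ) (τ σ : Matrix (a × e × r) (a × e × r) ℂ) (W : Matrix (a × e) (a × e) ℂ) :
    QQ s τ σ (extR r W) = QQ s (rAB τ) (rAB σ) W := by
  unfold QQ
  congr 1
  · congr 1
    · rw [Matrix.trace_mul_comm, extR_conj, trace_extR, Matrix.trace_mul_comm]
    · rw [Matrix.mul_assoc, Matrix.trace_mul_comm, Matrix.mul_assoc, extR_conj, extR_mul, trace_extR,
        Matrix.mul_assoc W, Matrix.trace_mul_comm W, Matrix.mul_assoc]
  · rw [Matrix.mul_assoc, Matrix.trace_mul_comm, Matrix.mul_assoc, extR_conj, extR_mul, trace_extR,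
        Matrix.mul_assoc Wᴴ, Matrix.trace_mul_comm Wᴴ, Matrix.mul_assoc]

theorem ssa_aux {τ : Matrix (a × e × r) (a × e × r) ℂ} (hτ : τ.PosSemidef) :
    - vN (rAB τ) + vN (r2B (rAB τ)) ≤ - vN τ + vN (r2B τ) := by
  obtain ⟨U, l, h⟩ := Dg.exists hτ
  obtain ⟨V, μ, hB⟩ := Dg.exists (r2B_psd hτ)
  obtain ⟨U', l', h'⟩ := Dg.exists (rAB_psd hτ)
  obtain ⟨V', μ', hB'⟩ := Dg.exists (r2B_psd (rAB_psd hτ))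
  have k1 := (Dg.const (a := a) 1 zero_le_one).kron hB
  have k2 := (Dg.const (a := a) 1 zero_le_one).kron hB'
  have := rel_mono h k1 h' k2 ?_ (kron_supp h hB one_pos) (kron_supp h' hB' one_pos) ?_
  · rw [kron_val hB one_pos, kron_val hB' one_pos] at this
    simpa using this
  · simp [Matrix.trace, rAB, Fintype.sum_prod_type]
  · intro s hs W'
    refine ⟨extR r W', ?_⟩
    rw [QQ_extR]
    refine le_of_eq ?_
    congr 1
    ext ⟨x, p⟩ ⟨y, q⟩
    simp only [rAB, r2B, Matrix.kroneckerMap_apply, Matrix.of_apply, Matrix.smul_apply]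
    rw [← Finset.mul_sum]
    congr 1
    rw [Finset.sum_comm]

theorem ssa {ρ : Matrix (a × b × e) (a × b × e) ℂ} (hρ : ρ.PosSemidef) :
    vN (rE ρ) - vN (rAE ρ) ≤ vN (rAB ρ) - vN (rB ρ) := by
  obtain ⟨U, l, hd⟩ := Dg.exists hρ
  obtain ⟨K, hK⟩ : ∃ K : Matrix (a × b × e) (a × b × e) ℂ, ρ = K * Kᴴ := by
    refine ⟨U * Matrix.diagonal (fun i => ((√(l i) : ℝ) : ℂ)), ?_⟩
    rw [Matrix.conjTranspose_mul, Matrix.diagonal_conjTranspose]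
    conv_lhs => rw [hd.eq]
    have : Matrix.diagonal (fun i => (l i : ℂ)) = Matrix.diagonal (fun i => ((√(l i) : ℝ) : ℂ))
       * Matrix.diagonal (star (fun i => ((√(l i) : ℝ) : ℂ))) := by
      rw [Matrix.diagonal_mul_diagonal]
      congr 1
      ext i
      rw [Pi.star_apply]
      simp only [RCLike.star_def, Complex.conj_ofReal]
      rw [← Complex.ofReal_mul, Real.mul_self_sqrt (hd.nn i)]
    rw [this]
    simp only [Matrix.mul_assoc]
  have hKe : ∀ x y, ρ x y = ∑ z, K x z * star (K y z) := by
    intro x y; rw [hK, Matrix.mul_apply]; simp [Matrix.conjTranspose_apply]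
  let M : Matrix (a × b) (e × (a × b × e)) ℂ := Matrix.of fun p q => K (p.1, p.2, q.1) q.2
  let N : Matrix b (a × e × (a × b × e)) ℂ := Matrix.of fun p q => K (q.1, p, q.2.1) q.2.2
  let τ : Matrix (a × e × (a × b × e)) (a × e × (a × b × e)) ℂ := (Nᴴ * N)ᵀ
  have e1 : rAB ρ = M * Mᴴ := by
    ext p q
    simp only [rAB, Matrix.of_apply, hKe, Matrix.mul_apply, Matrix.conjTranspose_apply, M,
      Fintype.sum_prod_type]
  have e2 : rB ρ = N * Nᴴ := by
    ext p q
    rw [Matrix.mul_apply]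
    simp only [rB, Matrix.of_apply, hKe, Matrix.conjTranspose_apply, N,
      Fintype.sum_prod_type]
  have e3 : r2B τ = (Mᴴ * M)ᵀ := by
    ext p q
    rw [Matrix.transpose_apply, Matrix.mul_apply]
    simp only [r2B, Matrix.of_apply, τ, Matrix.transpose_apply, Matrix.mul_apply,
      Matrix.conjTranspose_apply, M, N, Fintype.sum_prod_type]
  have e4 : rAB τ = rAE ρ := by
    ext p q
    simp only [rAB, rAE, Matrix.of_apply, τ, Matrix.transpose_apply, Matrix.mul_apply,
      Matrix.conjTranspose_apply, N, hKe]
    rw [Finset.sum_comm]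
    refine Finset.sum_congr rfl fun i _ => Finset.sum_congr rfl fun j _ => ?_
    rw [mul_comm]
  have e5 : r2B (rAE ρ) = rE ρ := rfl
  have hτ : τ.PosSemidef := (Matrix.posSemidef_conjTranspose_mul_self N).transpose
  have := ssa_aux hτ
  have v1 : vN τ = vN (rB ρ) := by
    rw [e2, vN_transpose (Matrix.posSemidef_conjTranspose_mul_self N).isHermitian]
    exact vN_mul_comm _ _ (Matrix.posSemidef_conjTranspose_mul_self N).isHermitian
      (Matrix.posSemidef_self_mul_conjTranspose N).isHermitian
  have v2 : vN (r2B τ) = vN (rAB ρ) := by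
    rw [e3, e1, vN_transpose (Matrix.posSemidef_conjTranspose_mul_self M).isHermitian]
    exact vN_mul_comm _ _ (Matrix.posSemidef_conjTranspose_mul_self M).isHermitian
      (Matrix.posSemidef_self_mul_conjTranspose M).isHermitian
  rw [e4, e5, v1, v2] at this
  linarith

end ssa

set_option linter.unusedSectionVars false

section dephasing

variable {a c : Type*} [Fintype a] [DecidableEq a] [Fintype c] [DecidableEq c]

lemma dA_mul (A M : Matrix (a × c) (a × c) ℂ) :
    dephaseA (dephaseA A * M) = dephaseA A * dephaseA M := by
  ext p q
  simp only [dephaseA, Matrix.of_apply, Matrix.mul_apply]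
  by_cases h : p.1 = q.1
  · rw [if_pos h]
    refine Finset.sum_congr rfl fun x _ => ?_
    by_cases h2 : p.1 = x.1
    · rw [if_pos h2, if_pos (h2.symm.trans h)]
    · rw [if_neg h2, zero_mul, zero_mul]
  · rw [if_neg h]
    symm
    refine Finset.sum_eq_zero fun x _ => ?_
    by_cases h2 : p.1 = x.1
    · rw [if_neg (fun h3 => h (h2.trans h3)), mul_zero]
    · rw [if_neg h2, zero_mul]

lemma dA_ct (A : Matrix (a × c) (a × c) ℂ) : dephaseA Aᴴ = (dephaseA A)ᴴ := by
  ext p q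
  simp only [dephaseA, Matrix.of_apply, Matrix.conjTranspose_apply]
  by_cases h : p.1 = q.1
  · simp [h]
  · simp [h, Ne.symm h]

lemma dA_mul' (A M : Matrix (a × c) (a × c) ℂ) :
    dephaseA (M * dephaseA A) = dephaseA M * dephaseA A := by
  have := congrArg conjTranspose (dA_mul Aᴴ Mᴴ)
  simpa [← dA_ct, Matrix.conjTranspose_mul] using this

lemma dA_idem (A : Matrix (a × c) (a × c) ℂ) : dephaseA (dephaseA A) = dephaseA A := by
  ext p q
  simp only [dephaseA, Matrix.of_apply]
  split_ifs <;> rfl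

lemma dA_sub (A B : Matrix (a × c) (a × c) ℂ) : dephaseA (A - B) = dephaseA A - dephaseA B := by
  ext p q
  simp only [dephaseA, Matrix.of_apply, Matrix.sub_apply]
  split_ifs <;> simp

lemma dA_trace (A : Matrix (a × c) (a × c) ℂ) : (dephaseA A).trace = A.trace := by
  simp [dephaseA, Matrix.trace]

lemma dA_trace_mul (A B : Matrix (a × c) (a × c) ℂ) :
    trace (A * dephaseA B) = trace (dephaseA A * B) := by
  rw [← dA_trace, dA_mul', ← dA_mul, dA_trace]

lemma dA_r2B (A : Matrix (a × c) (a × c) ℂ) : r2B (dephaseA A) = r2B A := by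
  ext p q
  simp [dephaseA, r2B]

lemma dA_psd {M : Matrix (a × c) (a × c) ℂ} (h : M.PosSemidef) : (dephaseA M).PosSemidef := by
  have : dephaseA M = ∑ x : a,
      (Matrix.diagonal (fun p : a × c => if p.1 = x then (1 : ℂ) else 0)) * M *
      (Matrix.diagonal (fun p : a × c => if p.1 = x then (1 : ℂ) else 0))ᴴ := by
    ext p q
    rw [Matrix.sum_apply]
    simp only [Matrix.diagonal_conjTranspose, Matrix.mul_diagonal, Matrix.diagonal_mul]
    simp only [dephaseA, Matrix.of_apply]
    rw [Finset.sum_eq_single p.1]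
    · by_cases h : p.1 = q.1
      · simp [h]
      · simp [h, Ne.symm h]
    · intro x _ hx
      simp [Ne.symm hx]
    · simp
  rw [this]
  exact Matrix.posSemidef_sum _ fun y _ => h.mul_mul_conjTranspose_same _

lemma dA_key {R : Matrix (a × c) (a × c) ℂ} (hR : R.PosSemidef) (W : Matrix (a × c) (a × c) ℂ) :
    (trace (dephaseA W * R * (dephaseA W)ᴴ)).re ≤ (trace (W * dephaseA R * Wᴴ)).re := by
  obtain ⟨N, hN⟩ : ∃ N, N = W - dephaseA W := ⟨_, rfl⟩
  have hW : W = dephaseA W + N := by rw [hN]; abel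
  have hN0 : dephaseA N = 0 := by rw [hN, dA_sub, dA_idem, sub_self]
  have e : trace (W * dephaseA R * Wᴴ) = trace (dephaseA W * dephaseA R * (dephaseA W)ᴴ)
      + trace (dephaseA W * dephaseA R * Nᴴ) + trace (N * dephaseA R * (dephaseA W)ᴴ)
      + trace (N * dephaseA R * Nᴴ) := by
    conv_lhs => rw [hW]
    rw [Matrix.conjTranspose_add]
    simp only [Matrix.add_mul, Matrix.mul_add, Matrix.trace_add]
    ring
  have e1 : trace (dephaseA W * dephaseA R * Nᴴ) = 0 := by
    rw [← dA_mul, Matrix.trace_mul_comm, dA_trace_mul, dA_ct, hN0]; simp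
  have e2 : trace (N * dephaseA R * (dephaseA W)ᴴ) = 0 := by
    rw [Matrix.mul_assoc, ← dA_ct, ← dA_mul, dA_trace_mul, hN0]; simp
  have e3 : trace (dephaseA W * dephaseA R * (dephaseA W)ᴴ)
      = trace (dephaseA W * R * (dephaseA W)ᴴ) := by
    rw [← dA_mul, ← dA_ct, ← dA_mul', dA_trace]
  have h4 := (dA_psd hR).mul_mul_conjTranspose_same N
  have h5 := (Complex.le_def.1 h4.trace_nonneg).1
  rw [e, e1, e2, e3]
  simp only [Complex.add_re, Complex.zero_re] at h5 ⊢
  linarith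

lemma QQ_dephase {R T : Matrix (a × c) (a × c) ℂ} (hR : R.PosSemidef) (hT : T.PosSemidef)
    {s : ℝ} (hs : 0 < s) (W : Matrix (a × c) (a × c) ℂ) :
    QQ s (dephaseA R) (dephaseA T) W ≤ QQ s R T (dephaseA W) := by
  have h1 := dA_key hR W
  have h2 := dA_key hT Wᴴ
  rw [dA_ct, Matrix.conjTranspose_conjTranspose, Matrix.conjTranspose_conjTranspose] at h2
  unfold QQ
  rw [dA_trace_mul, dA_ct]
  have := mul_le_mul_of_nonneg_left h1 hs.le
  linarith

lemma QQ_unitary {n : Type*} [Fintype n] [DecidableEq n] {F : Matrix n n ℂ} (hF : Fᴴ * F = 1)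
    (s : ℝ) (R T W : Matrix n n ℂ) :
    QQ s R T (F * W * Fᴴ) = QQ s (Fᴴ * R * F) (Fᴴ * T * F) W := by
  unfold QQ
  have e1 : trace ((F * W * Fᴴ)ᴴ * R) = trace (Wᴴ * (Fᴴ * R * F)) := by
    simp only [Matrix.conjTranspose_mul, Matrix.conjTranspose_conjTranspose]
    rw [Matrix.mul_assoc, Matrix.trace_mul_comm]
    simp only [Matrix.mul_assoc]
  have e2 : trace (F * W * Fᴴ * R * (F * W * Fᴴ)ᴴ) = trace (W * (Fᴴ * R * F) * Wᴴ) := by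
    calc _ = trace (F * (W * (Fᴴ * R * F) * Wᴴ * Fᴴ)) := by
          simp only [Matrix.conjTranspose_mul, Matrix.conjTranspose_conjTranspose, Matrix.mul_assoc]
      _ = trace ((W * (Fᴴ * R * F) * Wᴴ) * (Fᴴ * F)) := by
          rw [Matrix.trace_mul_comm]; simp only [Matrix.mul_assoc]
      _ = _ := by rw [hF, Matrix.mul_one]
  have e3 : trace ((F * W * Fᴴ)ᴴ * T * (F * W * Fᴴ)) = trace (Wᴴ * (Fᴴ * T * F) * W) := by
    calc _ = trace (F * (Wᴴ * (Fᴴ * T * F) * W * Fᴴ)) := by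
          simp only [Matrix.conjTranspose_mul, Matrix.conjTranspose_conjTranspose, Matrix.mul_assoc]
      _ = trace ((Wᴴ * (Fᴴ * T * F) * W) * (Fᴴ * F)) := by
          rw [Matrix.trace_mul_comm]; simp only [Matrix.mul_assoc]
      _ = _ := by rw [hF, Matrix.mul_one]
  rw [e1, e2, e3]

lemma dephase_dg {M : Matrix (a × c) (a × c) ℂ} (h : M.PosSemidef) :
    ∃ (V : Matrix (a × c) (a × c) ℂ) (μ : a × c → ℝ), Dg (dephaseA M) V μ ∧
      ∀ j, qv M V j = μ j := by
  have hx : ∀ x : a, ∃ (U : Matrix c c ℂ) (l : c → ℝ),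
      Dg (M.submatrix (fun y => (x, y)) (fun y => (x, y))) U l := fun x => Dg.exists (h.submatrix _)
  choose U l hU using hx
  let V : Matrix (a × c) (a × c) ℂ := Matrix.of fun p q => if p.1 = q.1 then U p.1 p.2 q.2 else 0
  have hV : dephaseA V = V := by
    ext p q
    simp only [V, dephaseA, Matrix.of_apply]
    split_ifs <;> rfl
  have h1 : Vᴴ * V = 1 := by
    ext ⟨x, y⟩ ⟨x', y'⟩
    have := congrFun (congrFun (hU x').h1 y) y'
    rw [Matrix.mul_apply] at this
    by_cases hxx : x = x'
    · subst hxx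
      simp [V, Matrix.mul_apply, Fintype.sum_prod_type, Matrix.one_apply] at this ⊢
      simpa [Finset.sum_ite_irrel, apply_ite (starRingEnd ℂ)] using this
    · simp [V, Matrix.mul_apply, Fintype.sum_prod_type, hxx,
        apply_ite (starRingEnd ℂ)]
      exact fun h => absurd h.symm hxx
  have h3 : dephaseA M = V * Matrix.diagonal (fun p : a × c => ((l p.1 p.2 : ℝ) : ℂ)) * Vᴴ := by
    ext ⟨x, y⟩ ⟨x', y'⟩
    have := congrFun (congrFun (hU x).eq y) y'
    rw [Matrix.mul_apply] at this
    rw [Matrix.mul_apply]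
    simp only [Matrix.mul_diagonal, Matrix.conjTranspose_apply, Matrix.submatrix_apply] at this ⊢
    by_cases hxx : x = x'
    · subst hxx
      simp [V, dephaseA, Fintype.sum_prod_type, Finset.sum_ite_irrel,
        apply_ite (starRingEnd ℂ)] at this ⊢
      exact this
    · simp [V, dephaseA, Fintype.sum_prod_type, hxx, Finset.sum_ite_irrel,
        apply_ite (starRingEnd ℂ), Ne.symm hxx]
  have hD : Dg (dephaseA M) V (fun p => l p.1 p.2) :=
    ⟨h1, mul_eq_one_comm.1 h1, h3, fun p => (hU p.1).nn p.2⟩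
  refine ⟨V, _, hD, fun j => ?_⟩
  rw [← hD.qv_self]
  unfold qv
  have : Vᴴ * dephaseA M * V = dephaseA (Vᴴ * M * V) := by
    have e : Vᴴ = dephaseA Vᴴ := by rw [dA_ct, hV]
    conv_rhs => rw [← hV, dA_mul', ← dA_ct, dA_mul]
    rw [hV, ← e]
  rw [this]
  simp [dephaseA]

end dephasing

section uncertainty

variable {c : Type*} [Fintype c] [DecidableEq c]

lemma conj_qomega (d : ℕ) : star (qomega d) = (qomega d)⁻¹ := by
  have h : qomega d = Complex.exp (((2 * Real.pi / d : ℝ) : ℂ) * Complex.I) := by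
    unfold qomega; congr 1; push_cast; ring
  rw [h, ← Complex.exp_neg]
  change (starRingEnd ℂ) _ = _
  rw [← Complex.exp_conj]
  congr 1
  rw [map_mul, Complex.conj_I, Complex.conj_ofReal]
  ring

lemma fourier_unitary (d : ℕ) [NeZero d] : (fourierMat d)ᴴ * fourierMat d = 1 := by
  have hd : d ≠ 0 := NeZero.ne d
  have hp : IsPrimitiveRoot (qomega d) d := Complex.isPrimitiveRoot_exp d hd
  have h0 : qomega d ≠ 0 := hp.ne_zero hd
  have hs : ((Real.sqrt d : ℝ) : ℂ) * ((Real.sqrt d : ℝ) : ℂ) = d := by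
    rw [← Complex.ofReal_mul, Real.mul_self_sqrt (Nat.cast_nonneg d)]; simp
  have hd' : (d : ℂ) ≠ 0 := by exact_mod_cast hd
  ext i j
  have key : ∀ k : Fin d, (fourierMat d)ᴴ i k * fourierMat d k j
      = ((qomega d)⁻¹ ^ (i : ℕ) * qomega d ^ (j : ℕ)) ^ (k : ℕ) / d := by
    intro k
    simp only [fourierMat, Matrix.conjTranspose_apply, Matrix.of_apply, star_div₀, star_pow,
      conj_qomega]
    rw [show star ((Real.sqrt d : ℝ) : ℂ) = ((Real.sqrt d : ℝ) : ℂ) from Complex.conj_ofReal _,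
      div_mul_div_comm, hs, mul_pow, ← pow_mul, ← pow_mul]
  rw [Matrix.mul_apply, Finset.sum_congr rfl fun k _ => key k, ← Finset.sum_div]
  set z := (qomega d)⁻¹ ^ (i : ℕ) * qomega d ^ (j : ℕ) with hz
  rw [Fin.sum_univ_eq_sum_range (fun k => z ^ k) d]
  by_cases hij : i = j
  · subst hij
    have : z = 1 := by rw [hz, ← mul_pow, inv_mul_cancel₀ h0, one_pow]
    rw [this]; simp [hd']
  · have hz1 : z ≠ 1 := by
      intro h
      apply hij
      rw [hz, inv_pow, inv_mul_eq_one₀ (pow_ne_zero _ h0)] at h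
      exact Fin.ext (hp.pow_inj i.2 j.2 h)
    have hzd : z ^ d = 1 := by
      rw [hz, mul_pow, ← pow_mul, ← pow_mul, mul_comm (i : ℕ), mul_comm (j : ℕ), pow_mul, pow_mul,
        inv_pow, hp.pow_eq_one]; simp
    rw [geom_sum_eq hz1, hzd, Matrix.one_apply_ne hij]; simp

lemma fourier_sq (d : ℕ) [NeZero d] (x y : Fin d) :
    star (fourierMat d y x) * fourierMat d y x = ((1 / d : ℝ) : ℂ) := by
  have hd : d ≠ 0 := NeZero.ne d
  have hp : IsPrimitiveRoot (qomega d) d := Complex.isPrimitiveRoot_exp d hd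
  have h0 : qomega d ≠ 0 := hp.ne_zero hd
  have hs : ((Real.sqrt d : ℝ) : ℂ) * ((Real.sqrt d : ℝ) : ℂ) = d := by
    rw [← Complex.ofReal_mul, Real.mul_self_sqrt (Nat.cast_nonneg d)]; simp
  simp only [fourierMat, Matrix.of_apply, star_div₀, star_pow, conj_qomega]
  rw [show star ((Real.sqrt d : ℝ) : ℂ) = ((Real.sqrt d : ℝ) : ℂ) from Complex.conj_ofReal _,
      div_mul_div_comm, hs, ← mul_pow, inv_mul_cancel₀ h0, one_pow]
  simp

lemma sigma_eq (d : ℕ) [NeZero d] (R : Matrix (Fin d × c) (Fin d × c) ℂ) :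
    dephaseA ((fourierMat d ⊗ₖ (1 : Matrix c c ℂ))ᴴ * dephaseA R * (fourierMat d ⊗ₖ (1 : Matrix c c ℂ)))
      = (((1 / d : ℝ) : ℂ) • (1 : Matrix (Fin d) (Fin d) ℂ)) ⊗ₖ r2B R := by
  ext ⟨x, i⟩ ⟨x', j⟩
  rw [dephaseA, Matrix.of_apply]
  by_cases hx : x = x'
  · subst hx
    simp only [if_true, Matrix.kroneckerMap_apply, Matrix.smul_apply, Matrix.one_apply_eq,
      smul_eq_mul, mul_one, r2B, Matrix.of_apply, Finset.mul_sum]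
    rw [Matrix.mul_apply, Fintype.sum_prod_type]
    refine Finset.sum_congr rfl fun y _ => ?_
    rw [Finset.sum_eq_single j]
    · rw [Matrix.mul_apply, Fintype.sum_prod_type, Finset.sum_eq_single y]
      · rw [Finset.sum_eq_single i]
        · simp only [Matrix.conjTranspose_apply, Matrix.kroneckerMap_apply, Matrix.one_apply_eq,
            mul_one, dephaseA, Matrix.of_apply, if_true]
          rw [← fourier_sq d x y]
          ring
        · intro k _ hk
          simp [hk]
        · simp
      · intro k _ hk
        refine Finset.sum_eq_zero fun z _ => ?_
        simp [dephaseA, hk]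
      · simp
    · intro k _ hk
      simp [hk]
    · simp
  · simp [hx]

lemma r2B_conj {d : ℕ} {F : Matrix (Fin d) (Fin d) ℂ} (hF : F * Fᴴ = 1)
    (R : Matrix (Fin d × c) (Fin d × c) ℂ) :
    r2B ((F ⊗ₖ (1 : Matrix c c ℂ))ᴴ * R * (F ⊗ₖ (1 : Matrix c c ℂ))) = r2B R := by
  ext i j
  have e : ∀ M : Matrix c c ℂ, M i j = trace (M * Matrix.single j i (1 : ℂ)) := by
    intro M; simp [Matrix.trace_mul_single]
  rw [e (r2B ((F ⊗ₖ (1 : Matrix c c ℂ))ᴴ * R * (F ⊗ₖ (1 : Matrix c c ℂ)))), e (r2B R), ← trace_r2B, ← trace_r2B, Matrix.mul_assoc, Matrix.mul_assoc,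
    Matrix.trace_mul_comm]
  congr 1
  rw [Matrix.mul_assoc]
  congr 1
  rw [Matrix.conjTranspose_kronecker, ← Matrix.mul_kronecker_mul, ← Matrix.mul_kronecker_mul]
  simp [hF]

theorem uncert (d : ℕ) [NeZero d] {R : Matrix (Fin d × c) (Fin d × c) ℂ} (hR : R.PosSemidef)
    (ht : R.trace = 1) :
    Real.logb 2 d + vN R + vN (r2B R) ≤ vN (dephaseA R) + vN (dephaseXA d R) := by
  have hd : (0 : ℝ) < d := by exact_mod_cast Nat.pos_of_ne_zero (NeZero.ne d)
  have hF := fourier_unitary d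
  have hF' := mul_eq_one_comm.1 hF
  have hG : (fourierMat d ⊗ₖ (1 : Matrix c c ℂ))ᴴ * (fourierMat d ⊗ₖ (1 : Matrix c c ℂ)) = 1 := by
    rw [Matrix.conjTranspose_kronecker, ← Matrix.mul_kronecker_mul, hF]; simp
  have hG' := mul_eq_one_comm.1 hG
  have hrB : r2B (dephaseA ((fourierMat d ⊗ₖ (1 : Matrix c c ℂ))ᴴ * R *
      (fourierMat d ⊗ₖ (1 : Matrix c c ℂ)))) = r2B R := by
    rw [dA_r2B, r2B_conj hF']
  have hS := sigma_eq d R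
  have hXA : dephaseXA d R = (fourierMat d ⊗ₖ (1 : Matrix c c ℂ)) *
    dephaseA ((fourierMat d ⊗ₖ (1 : Matrix c c ℂ))ᴴ * R * (fourierMat d ⊗ₖ (1 : Matrix c c ℂ))) *
    (fourierMat d ⊗ₖ (1 : Matrix c c ℂ))ᴴ := rfl
  generalize fourierMat d ⊗ₖ (1 : Matrix c c ℂ) = G at *
  have hP : (Gᴴ * R * G).PosSemidef := hR.conjTranspose_mul_mul_same G
  have hP2 : (Gᴴ * dephaseA R * G).PosSemidef := (dA_psd hR).conjTranspose_mul_mul_same G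
  have hvX : vN (dephaseXA d R) = vN (dephaseA (Gᴴ * R * G)) := by
    have e : Gᴴ * (G * dephaseA (Gᴴ * R * G)) = dephaseA (Gᴴ * R * G) := by
      rw [← Matrix.mul_assoc, hG, Matrix.one_mul]
    rw [hXA, vN_mul_comm, e]
    · exact ((dA_psd hP).mul_mul_conjTranspose_same G).1
    · rw [e]; exact (dA_psd hP).1
  have htt : (dephaseA (Gᴴ * R * G)).trace = 1 := by
    rw [dA_trace, Matrix.mul_assoc, Matrix.trace_mul_comm, Matrix.mul_assoc, hG', Matrix.mul_one, ht]
  obtain ⟨U, l, h⟩ := Dg.exists hR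
  obtain ⟨V, μ, hσ, hq⟩ := dephase_dg hR
  obtain ⟨U', l', h'⟩ := Dg.exists (dA_psd hP)
  obtain ⟨V', μ', hB'⟩ := Dg.exists (r2B_psd (dA_psd hP))
  have hκ : (0 : ℝ) < 1 / d := by positivity
  have k2 := (Dg.const (a := Fin d) (1 / d) hκ.le).kron hB'
  have main := rel_mono h hσ h' k2 (by rw [ht, htt]) (fun j hj => by rw [hq, hj])
    (kron_supp h' hB' hκ) (fun s hs W' => by
      refine ⟨G * dephaseA W' * Gᴴ, ?_⟩
      rw [QQ_unitary hG, hrB, ← hS]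
      exact QQ_dephase hP hP2 hs W')
  have hμ : ∑ i, μ' i = 1 := by
    have h1 := trace_dg hB'
    have h2 : (r2B (dephaseA (Gᴴ * R * G))).trace = 1 := by
      rw [← Matrix.mul_one (r2B (dephaseA (Gᴴ * R * G))), ← trace_r2B]
      simpa using htt
    rw [h2] at h1
    exact_mod_cast h1.symm
  have hv : ∑ j, qv R V j * Real.logb 2 (μ j) = - vN (dephaseA R) := by
    rw [hσ.vN_eq, neg_neg]
    exact Finset.sum_congr rfl fun j _ => by rw [hq]
  rw [kron_val hB' hκ, hv, hμ, hrB, one_mul, one_div, Real.logb_inv] at main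
  rw [hvX]
  linarith

end uncertainty

/-- decoupling theorem. If S(ρ^A) ≤ log₂ d, S(Z^A|B)_ρ ≤ ε₁ and
S(X^A|B)_ρ ≤ ε₂, then Tr|ρ^{AE} − ρ^A ⊗ ρ^E| ≤ 2√(ε₁+ε₂). -/
theorem decoupling (d : ℕ) [NeZero d]
    {b e : Type*} [Fintype b] [DecidableEq b] [Fintype e] [DecidableEq e]
    (ρ : Matrix (Fin d × b × e) (Fin d × b × e) ℂ) (hρ : IsDensity ρ)
    (ε₁ ε₂ : ℝ)
    (hA : vN (rA ρ) ≤ Real.logb 2 d)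
    (hZ : vN (dephaseA (rAB ρ)) - vN (rB ρ) ≤ ε₁)
    (hX : vN (dephaseXA d (rAB ρ)) - vN (rB ρ) ≤ ε₂) :
    traceNorm (rAE ρ - rA ρ ⊗ₖ rE ρ) ≤ 2 * Real.sqrt (ε₁ + ε₂) := by
  obtain ⟨hp, ht⟩ := hρ
  have eB : rB ρ = r2B (rAB ρ) := rfl
  have eE : rE ρ = r2B (rAE ρ) := rfl
  have eA : rA ρ = r2A (rAE ρ) := by
    ext i j
    simp only [rA, r2A, rAE, Matrix.of_apply]
    exact Finset.sum_comm
  have t1 : (rAB ρ).trace = 1 := by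
    rw [← ht]; simp [Matrix.trace, rAB, Fintype.sum_prod_type]
  have t2 : (rAE ρ).trace = 1 := by
    rw [← ht]
    simp only [Matrix.trace, rAE, Fintype.sum_prod_type, Matrix.diag_apply, Matrix.of_apply]
    exact Finset.sum_congr rfl fun _ _ => Finset.sum_comm
  have h1 := ssa hp
  have h2 := uncert d (rAB_psd hp) t1
  have h3 := mutual_bound (rAE_psd hp) t2 (r2A_psd (rAE_psd hp)) (r2B_psd (rAE_psd hp))
  rw [← eA, ← eE] at h3
  rw [← eB] at h2
  have hl0 : 0 < Real.log 2 := Real.log_pos (by norm_num)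
  have hl1 : Real.log 2 ≤ 1 := by have := Real.log_two_lt_d9; linarith
  have hI0 : 0 ≤ - vN (rAE ρ) + vN (rA ρ) + vN (rE ρ) := by
    have := sq_nonneg (traceNorm (rAE ρ - rA ρ ⊗ₖ rE ρ))
    by_contra hc
    push Not at hc
    have := mul_neg_of_pos_of_neg hl0 hc
    linarith
  have h4 := mul_le_mul_of_nonneg_right hl1 hI0
  have h5 : traceNorm (rAE ρ - rA ρ ⊗ₖ rE ρ) ^ 2 ≤ 4 * (ε₁ + ε₂) := by linarith
  have h6 := Real.le_sqrt_of_sq_le h5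
  rwa [Real.sqrt_mul (by norm_num), show (4 : ℝ) = 2 ^ 2 by norm_num,
    Real.sqrt_sq (by norm_num)] at h6
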